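/- arXiv:1710.07889 — 2 statements merged into one kernel-verified Lean document; each statement's English description precedes it below -/
import Mathlib

section
/- Let α, γ be real numbers with γ not an integer. Then for all real t: ( (1−α)(γ−α−1) t² / ( (γ−2)(1−γ)(2−γ)(3−γ) ) ) · ₁F₁(α; γ; t) · ₁F₁(2−α; 4−γ; −t) + ₁F₁(1−α; 2−γ; −t) · ₁F₁(α−1; γ−2; t) = 1. (Here (1−γ)₃ = (1−γ)(2−γ)(3−γ).) -/
open Finset

/-- Pochhammer symbol `(a)ₙ = a(a+1)⋯(a+n-1)` for natural `n`. -/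
noncomputable def poch (a : ℝ) (n : ℕ) : ℝ := Polynomial.eval a (ascPochhammer ℝ n)

/-- Pochhammer symbol `(a)ₖ` for integer `k`: for `k ≥ 0` the ascending product,
and `(a)₋ₖ = (-1)ᵏ/(1-a)ₖ` for `k ≥ 0`. -/
noncomputable def pochZ (a : ℝ) (k : ℤ) : ℝ :=
  if 0 ≤ k then poch a k.toNat else (-1) ^ (-k).toNat / poch (1 - a) (-k).toNat

/-- The (generally non-terminating) Clausen series `₃F₂(a,b,c;d,e;1)`. -/
noncomputable def F32 (a b c d e : ℝ) : ℝ :=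
  ∑' n : ℕ, poch a n * poch b n * poch c n / (poch d n * poch e n * n.factorial)

/-- A terminating `₃F₂(a,b,c;d,e;1)` summed over `k = 0, …, N`. -/
noncomputable def F32sum (N : ℕ) (a b c d e : ℝ) : ℝ :=
  ∑ k ∈ Finset.range (N + 1),
    poch a k * poch b k * poch c k / (poch d k * poch e k * k.factorial)

/-- The Kummer confluent hypergeometric function `₁F₁(a;b;x)`. -/
noncomputable def F11 (a b x : ℝ) : ℝ :=
  ∑' n : ℕ, poch a n * x ^ n / (poch b n * n.factorial)

/-! With `a = α - 1` and `b = γ - 2` the identity takes the form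

`₁F₁(a; b; x) ₁F₁(-a; -b; -x) + κ x² ₁F₁(a+1; b+2; x) ₁F₁(1-a; 2-b; -x) = 1`,

where `κ = a(a - b) / (b²(1 - b²))`, which is invariant under `(a, b, x) ↦ (-a, -b, -x)`.
At `x = 0` it is trivial, so it suffices that the left-hand side has derivative zero.
Put `E = ₁F₁(a+1; b+1; x)` and `G = ₁F₁(1-a; 1-b; -x)`. Both products have derivatives that are
bilinear in `E`, `G` and the four functions above, and the contiguous relation between `E`,
`₁F₁(a; b; x)` and `₁F₁(a+1; b+2; x)`, together with its mirror image for `G`, makes the two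
derivatives cancel. -/

open Filter Topology

section PowerSeries

variable {𝕜 : Type*} [RCLike 𝕜] {c : ℕ → 𝕜}

lemma summable_norm_succ_mul_mul_pow (hc : ∀ x, Summable fun n ↦ c n * x ^ n) {r : ℝ}
    (hr : 0 ≤ r) : Summable fun n : ℕ ↦ (n + 1) * ‖c (n + 1)‖ * r ^ n := by
  have hR : Summable fun n ↦ ‖c n‖ * (2 * (r + 1)) ^ n := by
    have hR₀ : ‖((2 * (r + 1) : ℝ) : 𝕜)‖ = 2 * (r + 1) := RCLike.norm_of_nonneg (by positivity)
    simpa only [norm_mul, norm_pow, hR₀] using (hc ((2 * (r + 1) : ℝ) : 𝕜)).norm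
  refine .of_nonneg_of_le (fun n ↦ by positivity) (fun n ↦ ?_) ((summable_nat_add_iff 1).2 hR)
  have h_two : (n + 1 : ℝ) ≤ 2 ^ (n + 1) := mod_cast (Nat.lt_two_pow_self (n := n + 1)).le
  have h_pow : r ^ n ≤ (r + 1) ^ (n + 1) :=
    (pow_le_pow_left₀ hr (by linarith) n).trans (pow_le_pow_right₀ (by linarith) n.le_succ)
  calc (n + 1) * ‖c (n + 1)‖ * r ^ n
      ≤ 2 ^ (n + 1) * ‖c (n + 1)‖ * (r + 1) ^ (n + 1) := by gcongr
    _ = ‖c (n + 1)‖ * (2 * (r + 1)) ^ (n + 1) := by rw [mul_pow]; ring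

lemma hasDerivAt_tsum_mul_pow (hc : ∀ x, Summable fun n ↦ c n * x ^ n) (x : 𝕜) :
    HasDerivAt (fun y ↦ ∑' n, c n * y ^ n) (∑' n : ℕ, (n + 1) * c (n + 1) * x ^ n) x := by
  have h_split (y : 𝕜) : ∑' n, c n * y ^ n = c 0 + ∑' n, c (n + 1) * y ^ (n + 1) := by
    simp [(hc y).tsum_eq_zero_add]
  have h_term (n : ℕ) (y : 𝕜) :
      HasDerivAt (fun z ↦ c (n + 1) * z ^ (n + 1)) ((n + 1) * c (n + 1) * y ^ n) y := by
    refine ((hasDerivAt_pow (n + 1) y).const_mul (c (n + 1))).congr_deriv ?_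
    rw [Nat.add_sub_cancel, Nat.cast_succ]
    ring
  have h_bound (n : ℕ) (y : 𝕜) (hy : y ∈ Metric.ball 0 (‖x‖ + 1)) :
      ‖(n + 1) * c (n + 1) * y ^ n‖ ≤ (n + 1) * ‖c (n + 1)‖ * (‖x‖ + 1) ^ n := by
    have hy' : ‖y‖ ≤ ‖x‖ + 1 := (mem_ball_zero_iff.1 hy).le
    have h_cast : ‖(n + 1 : 𝕜)‖ = n + 1 := mod_cast RCLike.norm_natCast (K := 𝕜) (n + 1)
    rw [norm_mul, norm_mul, norm_pow, h_cast]
    gcongr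
  have h_ball : IsPreconnected (Metric.ball (0 : 𝕜) (‖x‖ + 1)) := Metric.isPreconnected_ball
  have hx : x ∈ Metric.ball 0 (‖x‖ + 1) := by simp
  have h_summable : Summable fun n ↦ c (n + 1) * x ^ (n + 1) :=
    (hc x).comp_injective (add_left_injective 1)
  have h_tail := hasDerivAt_tsum_of_isPreconnected
    (summable_norm_succ_mul_mul_pow hc (by positivity)) Metric.isOpen_ball h_ball
    (fun n y _ ↦ h_term n y) h_bound hx h_summable hx
  rw [funext h_split]
  exact h_tail.const_add (c 0)

end PowerSeries

lemma poch_succ_left (a : ℝ) (n : ℕ) : poch a (n + 1) = a * poch (a + 1) n := by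
  simp [poch, ascPochhammer_succ_left, Polynomial.eval_comp]

lemma poch_succ_right (a : ℝ) (n : ℕ) : poch a (n + 1) = poch a n * (a + n) := by
  simp [poch, ascPochhammer_succ_eval]

/-- The coefficient of `xⁿ` in the Kummer series `₁F₁(a; b; x)`. -/
noncomputable def kummerCoeff (a b : ℝ) (n : ℕ) : ℝ := poch a n / (poch b n * n.factorial)

section KummerCoeff

variable (a b : ℝ) (n : ℕ)

lemma kummerCoeff_zero : kummerCoeff a b 0 = 1 := by simp [kummerCoeff, poch]

lemma succ_mul_kummerCoeff_succ_left :
    (n + 1) * kummerCoeff a b (n + 1) = a / b * kummerCoeff (a + 1) (b + 1) n := by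
  simp only [kummerCoeff, poch_succ_left, Nat.factorial_succ, Nat.cast_mul, Nat.cast_succ]
  field

lemma succ_mul_kummerCoeff_succ_right :
    (n + 1) * kummerCoeff a b (n + 1) = (a + n) / (b + n) * kummerCoeff a b n := by
  simp only [kummerCoeff, poch_succ_right, Nat.factorial_succ, Nat.cast_mul, Nat.cast_succ]
  field

variable {b n}

lemma kummerCoeff_eq_mul_add_one_right (hb : b ≠ 0) (hbn : b + n ≠ 0) :
    kummerCoeff a b n = (b + n) / b * kummerCoeff a (b + 1) n := by
  have h_poch : poch (b + 1) n = poch b n * (b + n) / b := by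
    rw [eq_div_iff hb, ← poch_succ_right, poch_succ_left, mul_comm]
  rw [kummerCoeff, kummerCoeff, h_poch]
  field

lemma kummerCoeff_succ_eq_add_one_right_add (hb : b ≠ 0) (hb₁ : b + 1 ≠ 0) (hbn : b + 1 + n ≠ 0) :
    kummerCoeff a b (n + 1) = kummerCoeff a (b + 1) (n + 1) +
      a / (b * (b + 1)) * kummerCoeff (a + 1) (b + 2) n := by
  have h_left := succ_mul_kummerCoeff_succ_left a b n
  have h_left' := succ_mul_kummerCoeff_succ_left a (b + 1) n
  rw [kummerCoeff_eq_mul_add_one_right (a + 1) hb₁ hbn] at h_left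
  rw [add_assoc b 1 1, one_add_one_eq_two] at h_left h_left'
  have hn : (n + 1 : ℝ) ≠ 0 := by positivity
  apply mul_left_cancel₀ hn
  rw [mul_add, h_left, h_left']
  field

lemma kummerCoeff_add_one_add_one_succ (hb : b ≠ 0) (hb₁ : b + 1 ≠ 0) (hbn : b + 1 + n ≠ 0) :
    kummerCoeff (a + 1) (b + 1) (n + 1) = kummerCoeff a b (n + 1) +
      (b - a) / (b * (b + 1)) * kummerCoeff (a + 1) (b + 2) n := by
  have h_left := succ_mul_kummerCoeff_succ_left a b n
  have h_right := succ_mul_kummerCoeff_succ_right (a + 1) (b + 1) n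
  rw [kummerCoeff_eq_mul_add_one_right (a + 1) hb₁ hbn, add_assoc b 1 1,
    one_add_one_eq_two] at h_left h_right
  have hn : (n + 1 : ℝ) ≠ 0 := by positivity
  apply mul_left_cancel₀ hn
  rw [mul_add, h_left, h_right]
  field

end KummerCoeff

section F11

variable (a b x : ℝ)

lemma summable_kummerCoeff_mul_pow : Summable fun n ↦ kummerCoeff a b n * x ^ n := by
  have h_frac : Tendsto (fun n : ℕ ↦ (a + n) / (b + n)) atTop (𝓝 1) := by
    simpa using tendsto_add_mul_div_add_mul_atTop_nhds a b (1 : ℝ) one_ne_zero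
  have h_ratio :
      Tendsto (fun n : ℕ ↦ ‖(a + n) / (b + n) * (1 / ((n : ℝ) + 1)) * x‖) atTop (𝓝 0) := by
    simpa using ((h_frac.mul tendsto_one_div_add_atTop_nhds_zero_nat).mul_const x).norm
  refine summable_of_ratio_norm_eventually_le (r := 1 / 2) (by norm_num) ?_
  filter_upwards [h_ratio.eventually_le_const one_half_pos] with n hn
  have h_succ : kummerCoeff a b (n + 1) * x ^ (n + 1) =
      (a + n) / (b + n) * (1 / ((n : ℝ) + 1)) * x * (kummerCoeff a b n * x ^ n) := by
    have h_right := succ_mul_kummerCoeff_succ_right a b n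
    rw [mul_comm, ← eq_div_iff (by positivity)] at h_right
    rw [h_right]
    ring
  rw [h_succ, norm_mul]
  gcongr

lemma F11_eq_tsum : F11 a b x = ∑' n, kummerCoeff a b n * x ^ n :=
  tsum_congr fun _ ↦ mul_div_right_comm _ _ _

lemma hasSum_F11 : HasSum (fun n ↦ kummerCoeff a b n * x ^ n) (F11 a b x) :=
  F11_eq_tsum a b x ▸ (summable_kummerCoeff_mul_pow a b x).hasSum

lemma hasSum_F11_sub_one :
    HasSum (fun n ↦ kummerCoeff a b (n + 1) * x ^ (n + 1)) (F11 a b x - 1) := by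
  simpa [kummerCoeff_zero] using (hasSum_nat_add_iff' 1).2 (hasSum_F11 a b x)

lemma F11_zero_right : F11 a b 0 = 1 := by
  rw [F11_eq_tsum, tsum_eq_single 0 (by simp +contextual)]
  simp [kummerCoeff_zero]

lemma hasDerivAt_F11 : HasDerivAt (F11 a b) (a / b * F11 (a + 1) (b + 1) x) x := by
  rw [funext (F11_eq_tsum a b), F11_eq_tsum, ← tsum_mul_left]
  simpa only [succ_mul_kummerCoeff_succ_left, mul_assoc] using
    hasDerivAt_tsum_mul_pow (summable_kummerCoeff_mul_pow a b) x

lemma hasDerivAt_F11_neg :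
    HasDerivAt (fun y ↦ F11 a b (-y)) (-(a / b * F11 (a + 1) (b + 1) (-x))) x := by
  simpa using! (hasDerivAt_F11 a b (-x)).comp x (hasDerivAt_neg x)

variable {a b} {a' b' a'' b'' k : ℝ}

lemma F11_eq_add_of_kummerCoeff_succ (h : ∀ n, kummerCoeff a b (n + 1) =
      kummerCoeff a' b' (n + 1) + k * kummerCoeff a'' b'' n) :
    F11 a b x = F11 a' b' x + k * x * F11 a'' b'' x := by
  have h_sum := (hasSum_F11_sub_one a' b' x).add ((hasSum_F11 a'' b'' x).mul_left (k * x))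
  have h_eq := (hasSum_F11_sub_one a b x).unique <| by
    convert! h_sum using 2 with n
    rw [h]
    ring
  linear_combination h_eq

lemma F11_eq_add_one_right_add (hb : ∀ n : ℕ, b + n ≠ 0) :
    F11 a b x = F11 a (b + 1) x + a / (b * (b + 1)) * x * F11 (a + 1) (b + 2) x :=
  F11_eq_add_of_kummerCoeff_succ x fun n ↦ kummerCoeff_succ_eq_add_one_right_add a
    (by simpa using hb 0) (by simpa using hb 1)
    (by simpa [add_assoc, add_comm (1 : ℝ)] using hb (n + 1))

lemma F11_add_one_add_one (hb : ∀ n : ℕ, b + n ≠ 0) :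
    F11 (a + 1) (b + 1) x = F11 a b x + (b - a) / (b * (b + 1)) * x * F11 (a + 1) (b + 2) x :=
  F11_eq_add_of_kummerCoeff_succ x fun n ↦ kummerCoeff_add_one_add_one_succ a
    (by simpa using hb 0) (by simpa using hb 1)
    (by simpa [add_assoc, add_comm (1 : ℝ)] using hb (n + 1))

lemma hasDerivAt_mul_F11 (hb : ∀ n : ℕ, b + n ≠ 0) :
    HasDerivAt (fun y ↦ y * F11 a (b + 1) y) (b * F11 a b x + (1 - b) * F11 a (b + 1) x) x := by
  refine ((hasDerivAt_id' x).mul (hasDerivAt_F11 a (b + 1) x)).congr_deriv ?_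
  have hb₀ : b ≠ 0 := by simpa using hb 0
  rw [F11_eq_add_one_right_add x hb, add_assoc b 1 1, one_add_one_eq_two]
  field

end F11

lemma hasDerivAt_F11_mul_F11_neg (a b x : ℝ) :
    HasDerivAt (fun y ↦ F11 a b y * F11 (-a) (-b) (-y))
      (a / b * (F11 (a + 1) (b + 1) x * F11 (-a) (-b) (-x) -
        F11 a b x * F11 (1 - a) (1 - b) (-x))) x := by
  refine ((hasDerivAt_F11 a b x).mul (hasDerivAt_F11_neg (-a) (-b) x)).congr_deriv ?_
  rw [neg_add_eq_sub, neg_add_eq_sub, neg_div_neg_eq]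
  ring

lemma hasDerivAt_sq_mul_F11_mul_F11_neg {b : ℝ} (hb : ∀ k : ℤ, b ≠ k) (a x : ℝ) :
    HasDerivAt (fun y ↦ y ^ 2 * (F11 (a + 1) (b + 2) y * F11 (1 - a) (2 - b) (-y)))
      (x * ((1 + b) * F11 (a + 1) (b + 1) x * F11 (1 - a) (2 - b) (-x) +
        (1 - b) * F11 (a + 1) (b + 2) x * F11 (1 - a) (1 - b) (-x))) x := by
  have hb_add : ∀ n : ℕ, b + 1 + n ≠ 0 := fun n h ↦ hb (-(n + 1)) (by push_cast; linarith)
  have hb_sub : ∀ n : ℕ, 1 - b + n ≠ 0 := fun n h ↦ hb (n + 1) (by push_cast; linarith)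
  have h_pos := hasDerivAt_mul_F11 (a := a + 1) x hb_add
  have h_neg := (hasDerivAt_mul_F11 (a := 1 - a) (-x) hb_sub).comp x (hasDerivAt_neg x)
  rw [show b + 1 + 1 = b + 2 by ring] at h_pos
  rw [show 1 - b + 1 = 2 - b by ring] at h_neg
  convert! (h_pos.mul h_neg).neg using 1
  · funext y
    simp only [Pi.neg_apply, Pi.mul_apply, Function.comp_apply]
    ring
  · simp only [Function.comp_apply]
    ring

lemma F11_mul_F11_neg_add {b : ℝ} (hb : ∀ k : ℤ, b ≠ k) (a x : ℝ) :
    F11 a b x * F11 (-a) (-b) (-x) + a * (a - b) / (b ^ 2 * (1 - b ^ 2)) *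
      (x ^ 2 * (F11 (a + 1) (b + 2) x * F11 (1 - a) (2 - b) (-x))) = 1 := by
  set W : ℝ → ℝ := fun y ↦ F11 a b y * F11 (-a) (-b) (-y) + a * (a - b) / (b ^ 2 * (1 - b ^ 2)) *
    (y ^ 2 * (F11 (a + 1) (b + 2) y * F11 (1 - a) (2 - b) (-y)))
  have hb₀ : b ≠ 0 := mod_cast hb 0
  have h_deriv (y : ℝ) : HasDerivAt W 0 y := by
    refine ((hasDerivAt_F11_mul_F11_neg a b y).add
      ((hasDerivAt_sq_mul_F11_mul_F11_neg hb a y).const_mul _)).congr_deriv ?_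
    have h_pos := F11_add_one_add_one (a := a) y (b := b)
      fun n h ↦ hb (-n) (by push_cast; linarith)
    have h_neg := F11_add_one_add_one (a := -a) (-y) (b := -b)
      fun n h ↦ hb n (by push_cast; linarith)
    rw [neg_add_eq_sub, neg_add_eq_sub, neg_add_eq_sub] at h_neg
    have hb_add : 1 + b ≠ 0 := fun h ↦ hb (-1) (by push_cast; linarith)
    have hb_sub : 1 - b ≠ 0 := fun h ↦ hb 1 (by push_cast; linarith)
    have h_sq : 1 - b ^ 2 = (1 + b) * (1 - b) := by ring
    rw [h_pos, h_neg, h_sq, add_comm b 1]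
    field
  have h_const : W x = W 0 := is_const_of_deriv_eq_zero
    (fun y ↦ (h_deriv y).differentiableAt) (fun y ↦ (h_deriv y).deriv) x 0
  exact h_const.trans (by simp [W, F11_zero_right])

theorem Kummer_example3 (α γ : ℝ) (hγ : ∀ k : ℤ, γ ≠ (k : ℝ)) (t : ℝ) :
    (1 - α) * (γ - α - 1) * t ^ 2 / ((γ - 2) * ((1 - γ) * (2 - γ) * (3 - γ))) *
        F11 α γ t * F11 (2 - α) (4 - γ) (-t) +
      F11 (1 - α) (2 - γ) (-t) * F11 (α - 1) (γ - 2) t = 1 := by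
  have hb : ∀ k : ℤ, γ - 2 ≠ k := fun k h ↦ hγ (k + 2) (by push_cast; linarith)
  have h_refl := F11_mul_F11_neg_add hb (α - 1) t
  have h_coeff : (α - 1) * (α - 1 - (γ - 2)) / ((γ - 2) ^ 2 * (1 - (γ - 2) ^ 2)) =
      (1 - α) * (γ - α - 1) / ((γ - 2) * ((1 - γ) * (2 - γ) * (3 - γ))) := by
    congr 1 <;> ring
  rw [h_coeff, neg_sub, neg_sub, sub_add_cancel, sub_add_cancel,
    show 1 - (α - 1) = 2 - α by ring, show 2 - (γ - 2) = 4 - γ by ring] at h_refl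
  linear_combination h_refl
end

section
/- Let α, γ be real numbers with γ not an integer. Then for all real t: ( (γ−α−2)(γ−α−1) t / ( (1−γ)(2−γ) ) ) · ₁F₁(α; γ; t) · ₁F₁(−α; 3−γ; −t) + α · ₁F₁(1−α; 2−γ; −t) · ₁F₁(α+1; γ−1; t) = α + t. (Here (γ−α−2)₂ = (γ−α−2)(γ−α−1) and (1−γ)₂ = (1−γ)(2−γ).) -/
open Finset

/-!
The identity holds between formal power series, and evaluation at `t` is multiplicative on
absolutely convergent series. Write `B = ₁F₁(α; γ; t)` and `C = ₁F₁(1 - α; 2 - γ; -t)`. By Kummer's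
transformation `t ^ (1 - γ) eᵗ C` is the second solution of Kummer's equation, so Abel's identity
makes the suitably rescaled Wronskian of the pair constant, equal to `1 - γ`. Contiguous relations
express `₁F₁(α + 1; γ - 1; t)` through `B, B'` and `₁F₁(-α; 3 - γ; -t)` through `C, C'`; after this
substitution the left-hand side is `α + t` times the Wronskian, divided by `1 - γ`.
-/

open PowerSeries Filter Topology

section FormalPowerSeries

variable {R : Type*} [CommSemiring R]

theorem mul_eval_add_one_ascPochhammer (a : R) (n : ℕ) :
    a * (ascPochhammer R n).eval (a + 1) = (ascPochhammer R n).eval a * (a + n) := by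
  rw [← ascPochhammer_succ_eval, ascPochhammer_succ_left]
  simp

theorem coeff_X_mul_derivative (f : R⟦X⟧) (n : ℕ) :
    coeff n (X * d⁄dX R f) = n * coeff n f := by
  cases n with
  | zero => simp
  | succ n => rw [coeff_succ_X_mul, coeff_derivative, mul_comm, Nat.cast_succ]

theorem derivative_rescale (c : R) (f : R⟦X⟧) :
    d⁄dX R (rescale c f) = C c * rescale c (d⁄dX R f) := by
  ext n
  simp only [coeff_derivative, coeff_rescale, coeff_C_mul]
  ring

theorem rescale_C (c r : R) : rescale c (C r) = C r := by
  ext n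
  cases n <;> simp [coeff_C]

theorem constantCoeff_rescale (c : R) (f : R⟦X⟧) :
    constantCoeff (rescale c f) = constantCoeff f := by
  simp only [← coeff_zero_eq_constantCoeff_apply, coeff_rescale, pow_zero, one_mul]

end FormalPowerSeries

theorem ascPochhammer_eval_ne_zero {R : Type*} [Semiring R] [NoZeroDivisors R] {b : R}
    (hb : ∀ n : ℕ, b + n ≠ 0) (n : ℕ) : (ascPochhammer R n).eval b ≠ 0 := by
  have := nontrivial_of_ne _ _ (hb 0)
  induction n with
  | zero => simp
  | succ n ih => rw [ascPochhammer_succ_eval]; exact mul_ne_zero ih (hb n)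

/-- The Kummer function `₁F₁(a; b; X)` as a formal power series. A coefficient with `(b)ₙ = 0` is
the junk value `0`, so `b` should not be a nonpositive integer. -/
noncomputable def kummerSeries {K : Type*} [Field K] (a b : K) : K⟦X⟧ :=
  mk fun n ↦ (ascPochhammer K n).eval a / ((ascPochhammer K n).eval b * n.factorial)

namespace kummerSeries

variable {K : Type*} [Field K]

theorem constantCoeff (a b : K) : PowerSeries.constantCoeff (kummerSeries a b) = 1 := by
  simp [kummerSeries, ← coeff_zero_eq_constantCoeff_apply]

theorem mul_coeff_add_one_left (a b : K) (n : ℕ) :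
    a * coeff n (kummerSeries (a + 1) b) = (a + n) * coeff n (kummerSeries a b) := by
  simp only [kummerSeries, coeff_mk]
  rw [← mul_div_assoc, mul_eval_add_one_ascPochhammer, mul_comm, mul_div_assoc]

theorem X_mul_derivative_add_mul_left (a b : K) :
    X * d⁄dX K (kummerSeries a b) + C a * kummerSeries a b = C a * kummerSeries (a + 1) b := by
  ext n
  simp only [map_add, coeff_X_mul_derivative, coeff_C_mul]
  rw [mul_coeff_add_one_left]
  ring

variable [CharZero K] {a b : K}

theorem mul_coeff_add_one_right (hb : ∀ n : ℕ, b + n ≠ 0) (n : ℕ) :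
    (b + n) * coeff n (kummerSeries a (b + 1)) = b * coeff n (kummerSeries a b) := by
  have hpoch := ascPochhammer_eval_ne_zero hb n
  have hpoch_add_one : (ascPochhammer K n).eval (b + 1) ≠ 0 := by
    refine right_ne_zero_of_mul (a := b) ?_
    rw [mul_eval_add_one_ascPochhammer]
    exact mul_ne_zero hpoch (hb n)
  have hfact : (n.factorial : K) ≠ 0 := mod_cast n.factorial_ne_zero
  simp only [kummerSeries, coeff_mk]
  field_simp
  linear_combination -(ascPochhammer K n).eval a * mul_eval_add_one_ascPochhammer b n

theorem coeff_succ_eq_mul_coeff_add_one_left (hb : ∀ n : ℕ, b + n ≠ 0) (n : ℕ) :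
    (n + 1) * (b + n) * coeff (n + 1) (kummerSeries a b) =
      a * coeff n (kummerSeries (a + 1) b) := by
  have hbn := hb n
  have hpoch := ascPochhammer_eval_ne_zero hb n
  have hfact : (n.factorial : K) ≠ 0 := mod_cast n.factorial_ne_zero
  have hn : (n + 1 : K) ≠ 0 := n.cast_add_one_ne_zero
  simp only [kummerSeries, coeff_mk, Nat.factorial_succ, ascPochhammer_succ_eval]
  push_cast
  field_simp
  exact (mul_eval_add_one_ascPochhammer a n).symm

theorem coeff_succ (hb : ∀ n : ℕ, b + n ≠ 0) (n : ℕ) :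
    (n + 1) * (b + n) * coeff (n + 1) (kummerSeries a b) =
      (a + n) * coeff n (kummerSeries a b) := by
  rw [coeff_succ_eq_mul_coeff_add_one_left hb, mul_coeff_add_one_left]

theorem X_mul_derivative_add_mul_right (hb : ∀ n : ℕ, b + n ≠ 0) :
    X * d⁄dX K (kummerSeries a (b + 1)) + C b * kummerSeries a (b + 1) =
      C b * kummerSeries a b := by
  ext n
  simp only [map_add, coeff_X_mul_derivative, coeff_C_mul]
  rw [← mul_coeff_add_one_right hb]
  ring

theorem kummer_equation (hb : ∀ n : ℕ, b + n ≠ 0) :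
    X * d⁄dX K (d⁄dX K (kummerSeries a b)) + C b * d⁄dX K (kummerSeries a b) =
      X * d⁄dX K (kummerSeries a b) + C a * kummerSeries a b := by
  ext n
  simp only [map_add, coeff_X_mul_derivative, coeff_C_mul, coeff_derivative]
  linear_combination coeff_succ (a := a) hb n

theorem X_mul_derivative_sub_X_mul (hb : ∀ n : ℕ, b + n ≠ 0) :
    X * d⁄dX K (kummerSeries (a + 1) b) + (C (b - a - 1) - X) * kummerSeries (a + 1) b =
      C (b - a - 1) * kummerSeries a b := by
  ext n
  cases n with
  | zero => simp [sub_mul, constantCoeff]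
  | succ n =>
    simp only [map_add, sub_mul, map_sub (coeff _), coeff_succ_X_mul, coeff_derivative,
      coeff_C_mul]
    refine mul_left_cancel₀ (mul_ne_zero n.cast_add_one_ne_zero (hb n)) ?_
    linear_combination (n + b - a) * coeff_succ (a := a + 1) hb n -
      (b - a - 1) * coeff_succ_eq_mul_coeff_add_one_left (a := a) hb n

theorem mul_sub_derivative (hb : ∀ n : ℕ, b + n ≠ 0) :
    C b * (kummerSeries a b - d⁄dX K (kummerSeries a b)) =
      C (b - a) * kummerSeries a (b + 1) := by
  ext n
  simp only [coeff_C_mul, map_sub (coeff _), coeff_derivative]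
  refine mul_left_cancel₀ (hb n) ?_
  linear_combination (a - b) * mul_coeff_add_one_right (a := a) hb n - b * coeff_succ (a := a) hb n

theorem mul_add_one_left_eq_derivative_add_one_right (hb : ∀ n : ℕ, b + n ≠ 0) :
    C (a * b) * kummerSeries (a + 1) b =
      (X + C a) * (X * d⁄dX K (kummerSeries a (b + 1))) +
        C a * (X + C b) * kummerSeries a (b + 1) := by
  have hb_add_one (n : ℕ) : b + 1 + n ≠ 0 := by
    simpa [add_assoc, add_comm (1 : K)] using hb (n + 1)
  have raise_left := X_mul_derivative_add_mul_left a b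
  have lower_right := X_mul_derivative_add_mul_right (a := a) hb
  have lower_right_deriv := congrArg (d⁄dX K) lower_right
  have equation := kummer_equation (a := a) hb_add_one
  simp only [map_add, map_mul, map_one, Derivation.leibniz, smul_eq_mul, derivative_X,
    derivative_C, mul_one, mul_zero, add_zero] at lower_right_deriv equation ⊢
  linear_combination X * equation - C b * raise_left - C a * lower_right - X * lower_right_deriv

theorem mul_add_one_right_eq_derivative_add_one_left (hb : ∀ n : ℕ, b + n ≠ 0) :
    C ((b - a) * (b - a - 1)) * kummerSeries a (b + 1) =
      C b * ((X + C a) * d⁄dX K (kummerSeries (a + 1) b) +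
        (C (b - 2 * a - 1) - X) * kummerSeries (a + 1) b) := by
  have raise_right := mul_sub_derivative (a := a) hb
  have lower_left := X_mul_derivative_sub_X_mul (a := a) hb
  have lower_left_deriv := congrArg (d⁄dX K) lower_left
  have equation := kummer_equation (a := a + 1) hb
  simp only [map_add, map_sub, map_mul, map_one, map_ofNat, Derivation.leibniz, smul_eq_mul,
    derivative_X, derivative_C, derivative_one, mul_one, mul_zero, add_zero, sub_zero]
    at raise_right lower_left lower_left_deriv equation ⊢
  linear_combination (-(C b - C a - 1)) * raise_right - C b * lower_left +
    C b * lower_left_deriv - C b * equation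

/-- The Wronskian of the solutions `u` and `t ^ (1 - b) eᵗ v(-t)` of Kummer's equation with lower
parameter `b`, multiplied by `t ^ b e⁻ᵗ` so that it is a power series in `t`. -/
noncomputable def wronskian (b : K) (u v : K⟦X⟧) : K⟦X⟧ :=
  u * ((C (1 - b) + X) * rescale (-1) v - X * rescale (-1) (d⁄dX K v)) -
    X * d⁄dX K u * rescale (-1) v

theorem wronskian_eq (hb : ∀ n : ℕ, b + n ≠ 0) (hb' : ∀ n : ℕ, 2 - b + n ≠ 0) :
    wronskian b (kummerSeries a b) (kummerSeries (1 - a) (2 - b)) = C (1 - b) := by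
  have equation := kummer_equation (a := a) hb
  have reflected_equation := congrArg (rescale (-1)) (kummer_equation (a := 1 - a) hb')
  refine derivative.ext ?_ (by simp [wronskian, constantCoeff, constantCoeff_rescale])
  simp only [wronskian, map_add, map_sub, map_mul, map_one, map_ofNat, map_neg, rescale_X,
    rescale_C, derivative_rescale, Derivation.leibniz, smul_eq_mul, derivative_X, derivative_C,
    derivative_one] at reflected_equation ⊢
  linear_combination -kummerSeries a b * reflected_equation -
    rescale (-1) (kummerSeries (1 - a) (2 - b)) * equation

theorem bilinear_identity (a : K) (hb : ∀ k : ℤ, b ≠ k) :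
    C ((b - a - 2) * (b - a - 1)) * X * kummerSeries a b *
          rescale (-1) (kummerSeries (-a) (3 - b)) +
        C ((1 - b) * (2 - b) * a) * rescale (-1) (kummerSeries (1 - a) (2 - b)) *
          kummerSeries (a + 1) (b - 1) =
      C ((1 - b) * (2 - b)) * (C a + X) := by
  have hb₀ (n : ℕ) : b + n ≠ 0 := fun h ↦ hb (-n) (by push_cast; linear_combination h)
  have hb₁ (n : ℕ) : b - 1 + n ≠ 0 := fun h ↦ hb (1 - n) (by push_cast; linear_combination h)
  have hb₂ (n : ℕ) : 2 - b + n ≠ 0 := fun h ↦ hb (2 + n) (by push_cast; linear_combination -h)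
  have wronskian_const := wronskian_eq (a := a) hb₀ hb₂
  have upper_raised := mul_add_one_left_eq_derivative_add_one_right (a := a) hb₁
  have upper_lowered := congrArg (rescale (-1))
    (mul_add_one_right_eq_derivative_add_one_left (a := -a) hb₂)
  rw [sub_add_cancel] at upper_raised
  rw [neg_add_eq_sub, show 2 - b + 1 = 3 - b by ring] at upper_lowered
  simp only [wronskian, map_add, map_sub, map_mul, map_one, map_ofNat, map_neg,
    rescale_X, rescale_C] at wronskian_const upper_raised upper_lowered ⊢
  linear_combination X * kummerSeries a b * upper_lowered -
    (2 - C b) * rescale (-1) (kummerSeries (1 - a) (2 - b)) * upper_raised +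
    (2 - C b) * (C a + X) * wronskian_const

end kummerSeries

/-- The power series `f` converges at `x`, with sum `s`. The convergence is unconditional, hence
absolute. -/
def HasValueAt {𝕜 : Type*} [RCLike 𝕜] (f : 𝕜⟦X⟧) (x s : 𝕜) : Prop :=
  HasSum (fun n ↦ coeff n f * x ^ n) s

namespace HasValueAt

variable {𝕜 : Type*} [RCLike 𝕜] {f g : 𝕜⟦X⟧} {x s r : 𝕜}

theorem unique (hf : HasValueAt f x s) (hf' : HasValueAt f x r) : s = r :=
  HasSum.unique hf hf'

theorem C (r x : 𝕜) : HasValueAt (PowerSeries.C r) x r := by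
  have single_term := hasSum_single (f := fun n ↦ coeff n (PowerSeries.C r) * x ^ n) 0
    fun n hn ↦ by simp [coeff_C, hn]
  simpa [HasValueAt] using single_term

theorem X (x : 𝕜) : HasValueAt PowerSeries.X x x := by
  have single_term := hasSum_single (f := fun n ↦ coeff n PowerSeries.X * x ^ n) 1
    fun n hn ↦ by simp [coeff_X, hn]
  simpa [HasValueAt] using single_term

theorem add (hf : HasValueAt f x s) (hg : HasValueAt g x r) : HasValueAt (f + g) x (s + r) := by
  simpa only [HasValueAt, map_add, add_mul] using HasSum.add hf hg

theorem mul (hf : HasValueAt f x s) (hg : HasValueAt g x r) : HasValueAt (f * g) x (s * r) := by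
  have hfn := hf.summable.norm
  have hgn := hg.summable.norm
  have coeff_mul_eq (n : ℕ) : coeff n (f * g) * x ^ n =
      ∑ kl ∈ antidiagonal n, coeff kl.1 f * x ^ kl.1 * (coeff kl.2 g * x ^ kl.2) := by
    rw [coeff_mul, sum_mul]
    refine sum_congr rfl fun kl hkl ↦ ?_
    rw [← mem_antidiagonal.1 hkl, pow_add]
    ring
  rw [HasValueAt, ← HasSum.tsum_eq hf, ← HasSum.tsum_eq hg,
    tsum_mul_tsum_eq_tsum_sum_antidiagonal_of_summable_norm hfn hgn]
  simp only [coeff_mul_eq]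
  exact (summable_norm_sum_mul_antidiagonal_of_summable_norm hfn hgn).of_norm.hasSum

theorem rescale {c : 𝕜} (hf : HasValueAt f (c * x) s) :
    HasValueAt (PowerSeries.rescale c f) x s := by
  simpa only [HasValueAt, coeff_rescale, mul_pow, mul_assoc, mul_left_comm] using hf

end HasValueAt

namespace kummerSeries

theorem summable_coeff_mul_pow {𝕜 : Type*} [RCLike 𝕜] {b : 𝕜} (a x : 𝕜)
    (hb : ∀ n : ℕ, b + n ≠ 0) : Summable fun n ↦ coeff n (kummerSeries a b) * x ^ n := by
  have term_succ (n : ℕ) : coeff (n + 1) (kummerSeries a b) * x ^ (n + 1) =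
      (a + n) / (b + n) * (1 / (n + 1)) * x * (coeff n (kummerSeries a b) * x ^ n) := by
    have hbn := hb n
    have hn : (n + 1 : 𝕜) ≠ 0 := n.cast_add_one_ne_zero
    field_simp
    linear_combination x * x ^ n * coeff_succ (a := a) hb n
  have ratio_tendsto : Tendsto (fun n : ℕ ↦ (a + n) / (b + n) * (1 / (n + 1)) * x) atTop (𝓝 0) := by
    simpa using ((tendsto_add_mul_div_add_mul_atTop_nhds a b 1 one_ne_zero).mul
      (tendsto_one_div_add_atTop_nhds_zero_nat (𝕜 := 𝕜))).mul_const x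
  refine summable_of_ratio_norm_eventually_le (r := 1 / 2) (by norm_num) ?_
  have ratio_le := ratio_tendsto.norm.eventually_le_const (by norm_num : ‖(0 : 𝕜)‖ < 1 / 2)
  filter_upwards [ratio_le] with n hn
  rw [term_succ, norm_mul]
  gcongr

theorem hasValueAt_F11 {b : ℝ} (a x : ℝ) (hb : ∀ n : ℕ, b + n ≠ 0) :
    HasValueAt (kummerSeries a b) x (F11 a b x) := by
  have F11_eq : F11 a b x = ∑' n, coeff n (kummerSeries a b) * x ^ n := by
    simp only [F11, poch, kummerSeries, coeff_mk, div_mul_eq_mul_div]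
  rw [F11_eq]
  exact (summable_coeff_mul_pow a x hb).hasSum

end kummerSeries

theorem Kummer_example5 (α γ : ℝ) (hγ : ∀ k : ℤ, γ ≠ (k : ℝ)) (t : ℝ) :
    (γ - α - 2) * (γ - α - 1) * t / ((1 - γ) * (2 - γ)) *
        F11 α γ t * F11 (-α) (3 - γ) (-t) +
      α * F11 (1 - α) (2 - γ) (-t) * F11 (α + 1) (γ - 1) t = α + t := by
  have ne_int (k : ℤ) : γ - k ≠ 0 := sub_ne_zero.2 (hγ k)
  have hA := kummerSeries.hasValueAt_F11 (b := γ - 1) (α + 1) t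
    fun n h ↦ ne_int (1 - n) (by push_cast; linarith)
  have hB := kummerSeries.hasValueAt_F11 (b := γ) α t
    fun n h ↦ ne_int (-n) (by push_cast; linarith)
  have hC := kummerSeries.hasValueAt_F11 (b := 2 - γ) (1 - α) (-1 * t)
    fun n h ↦ ne_int (2 + n) (by push_cast; linarith)
  have hD := kummerSeries.hasValueAt_F11 (b := 3 - γ) (-α) (-1 * t)
    fun n h ↦ ne_int (3 + n) (by push_cast; linarith)
  have value_lhs := ((((HasValueAt.C ((γ - α - 2) * (γ - α - 1)) t).mul (.X t)).mul hB).mul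
    hD.rescale).add (((HasValueAt.C ((1 - γ) * (2 - γ) * α) t).mul hC.rescale).mul hA)
  rw [kummerSeries.bilinear_identity α hγ] at value_lhs
  have cleared := value_lhs.unique ((HasValueAt.C _ t).mul ((HasValueAt.C α t).add (.X t)))
  have h₁ : 1 - γ ≠ 0 := fun h ↦ ne_int 1 (by push_cast; linarith)
  have h₂ : 2 - γ ≠ 0 := fun h ↦ ne_int 2 (by push_cast; linarith)
  rw [neg_one_mul] at cleared
  field_simp
  linear_combination cleared
end
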